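/- Let u ∈ C²(closed 𝔻) be a solution of (P_ε). Then for every C¹ vector field F : closed 𝔻 → ℝ² the following Pohozaev-type identity holds: ∫_{∂𝔻} [ 2K_ε(x)e^{u}(F·ν) + (2h_ε(x)e^{u/2} − 2h̃_ε)(∇u·F) − ½|∇u|²(F·ν) ] = ∫_𝔻 [ 2K̃_ε ∇u·F + 2e^{u}(∇K_ε·F + K_ε ∇·F) + DF(∇u,∇u) − ½(∇·F)|∇u|² ], where DF(∇u,∇u) = Σ_{i,j} (∂F_i/∂x_j)(∂u/∂x_i)(∂u/∂x_j) and ∇·F is the divergence of F. -/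

import Mathlib

open MeasureTheory Real Filter

noncomputable section

/-- The open unit disk in ℝ² ≅ ℂ. -/
def unitDisk : Set ℂ := Metric.ball 0 1

/-- The unit circle ∂𝔻. -/
def unitCircle : Set ℂ := Metric.sphere 0 1

/-- The closed unit disk. -/
def closedUnitDisk : Set ℂ := Metric.closedBall 0 1

/-- Directional derivative of `u` at `x` in direction `v`. -/
def pd (u : ℂ → ℝ) (v x : ℂ) : ℝ := fderiv ℝ u x v

/-- Laplacian of `u` at `x`. -/
def lap (u : ℂ → ℝ) (x : ℂ) : ℝ :=
  fderiv ℝ (fun y => pd u 1 y) x 1 + fderiv ℝ (fun y => pd u Complex.I y) x Complex.I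

/-- Squared norm of the gradient, |∇u|². -/
def gradSq (u : ℂ → ℝ) (x : ℂ) : ℝ := pd u 1 x ^ 2 + pd u Complex.I x ^ 2

/-- Outward normal derivative ∂_ν u(x) = ∇u(x)·x at a boundary point. -/
def nderiv (u : ℂ → ℝ) (x : ℂ) : ℝ := x.re * pd u 1 x + x.im * pd u Complex.I x

/-- Tangential derivative ∂_τ u(x) = ∇u(x)·(−x₂,x₁) at a boundary point. -/
def tderiv (u : ℂ → ℝ) (x : ℂ) : ℝ := -x.im * pd u 1 x + x.re * pd u Complex.I x

/-- Unit-speed parametrization of the unit circle. -/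
def bpt (θ : ℝ) : ℂ := Complex.exp ((θ : ℂ) * Complex.I)

/-- Integral over ∂𝔻 with respect to arclength. -/
def bint (f : ℂ → ℝ) : ℝ := ∫ θ in (0:ℝ)..(2 * π), f (bpt θ)

/-- A solution of the prescribed curvature problem for `(K, h)`. -/
def IsSolution (K h u : ℂ → ℝ) : Prop :=
  ContDiff ℝ 2 u ∧
  (∀ x ∈ unitDisk, -lap u x = 2 * K x * Real.exp (u x)) ∧
  (∀ x ∈ unitCircle, nderiv u x + 2 = 2 * h x * Real.exp (u x / 2))

/-- The auxiliary function Φ = H + √(H² + K). -/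
def Phi (K H : ℂ → ℝ) (x : ℂ) : ℝ := H x + Real.sqrt (H x ^ 2 + K x)

/-- `H` is the harmonic extension of `h`, C¹ up to the boundary. -/
def IsHarmExt (h H : ℂ → ℝ) : Prop :=
  ContDiff ℝ 1 H ∧ ContDiffOn ℝ 2 H unitDisk ∧
  (∀ x ∈ unitDisk, lap H x = 0) ∧ ∀ x ∈ unitCircle, H x = h x

/-- K_ε. -/
def Keps (K : ℂ → ℝ) (ε : ℝ) (x : ℂ) : ℝ := (K x - ε / 2) / (1 + ε)

/-- h_ε. -/
def heps (h : ℂ → ℝ) (ε : ℝ) (x : ℂ) : ℝ := h x / (1 + ε)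

/-- K̃_ε. -/
def Ktil (ε : ℝ) : ℝ := -ε / (2 * (1 + ε))

/-- h̃_ε. -/
def htil (ε : ℝ) : ℝ := 1 / (1 + ε)

/-- A solution of the perturbed problem (P_ε). -/
def IsPerturbedSolution (K h : ℂ → ℝ) (ε : ℝ) (u : ℂ → ℝ) : Prop :=
  ContDiff ℝ 2 u ∧
  (∀ x ∈ unitDisk, -lap u x + 2 * Ktil ε = 2 * Keps K ε x * Real.exp (u x)) ∧
  (∀ x ∈ unitCircle, nderiv u x + 2 * htil ε = 2 * heps h ε x * Real.exp (u x / 2))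

/-- The energy functional I. -/
def Ifun (K h u : ℂ → ℝ) : ℝ :=
  (∫ x in unitDisk, ((1/2) * gradSq u x - 2 * K x * Real.exp (u x))) +
  bint (fun x => 2 * u x - 4 * h x * Real.exp (u x / 2))

/-- The perturbation term T. -/
def Tfun (u : ℂ → ℝ) : ℝ :=
  ∫ x in unitDisk, ((1/2) * gradSq u x + Real.exp (u x) - u x)

/-- The perturbed functional I_ε. -/
def Ieps (K h : ℂ → ℝ) (ε : ℝ) (u : ℂ → ℝ) : ℝ := (Ifun K h u + ε * Tfun u) / (1 + ε)

/-- Euclidean dot product on ℝ² ≅ ℂ. -/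
def dotC (a b : ℂ) : ℝ := a.re * b.re + a.im * b.im

/-- The gradient of `u` at `x`, as a point of ℝ² ≅ ℂ. -/
def gradC (u : ℂ → ℝ) (x : ℂ) : ℂ := (⟨pd u 1 x, pd u Complex.I x⟩ : ℂ)

/-- Divergence of a vector field F : ℝ² → ℝ². -/
def divC (F : ℂ → ℂ) (x : ℂ) : ℝ := (fderiv ℝ F x 1).re + (fderiv ℝ F x Complex.I).im

/-- Polar parametrization. -/
def pcx (p : ℝ × ℝ) : ℂ := (p.1 : ℂ) * ((Real.cos p.2 : ℂ) + (Real.sin p.2 : ℂ) * Complex.I)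

lemma pcx_contDiff : ContDiff ℝ 1 pcx := by
  unfold pcx
  have h1 : ContDiff ℝ 1 (fun x : ℝ => (x : ℂ)) := Complex.ofRealCLM.contDiff
  have h2 : ContDiff ℝ 1 (fun p : ℝ × ℝ => ((Real.cos p.2 : ℝ) : ℂ)) :=
    h1.comp (Real.contDiff_cos.comp contDiff_snd)
  have h3 : ContDiff ℝ 1 (fun p : ℝ × ℝ => ((Real.sin p.2 : ℝ) : ℂ)) :=
    h1.comp (Real.contDiff_sin.comp contDiff_snd)
  exact (h1.comp contDiff_fst).mul (h2.add (h3.mul contDiff_const))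

lemma clm_decomp (A : ℂ →L[ℝ] ℝ) (a b : ℝ) :
    A ((a : ℂ) + (b : ℂ) * Complex.I) = a * A 1 + b * A Complex.I := by
  have : ((a : ℂ) + (b : ℂ) * Complex.I) = a • (1 : ℂ) + b • Complex.I := by
    simp
  rw [this, map_add, map_smul, map_smul]; simp

lemma hasDeriv_r (P : ℂ → ℝ) (hP : ContDiff ℝ 1 P) (r t : ℝ) :
    HasDerivAt (fun s => P (pcx (s, t)))
      (Real.cos t * fderiv ℝ P (pcx (r, t)) 1 + Real.sin t * fderiv ℝ P (pcx (r, t)) Complex.I) r := by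
  have h1 : HasDerivAt (fun s : ℝ => pcx (s, t))
      ((Real.cos t : ℂ) + (Real.sin t : ℂ) * Complex.I) r := by
    unfold pcx
    simpa using (Complex.ofRealCLM.hasDerivAt (x := r)).mul_const
      ((Real.cos t : ℂ) + (Real.sin t : ℂ) * Complex.I)
  have h2 := ((hP.differentiable (by norm_num)) (pcx (r, t))).hasFDerivAt
  have h3 := h2.comp_hasDerivAt r h1
  rw [clm_decomp] at h3
  exact h3

lemma hasDeriv_t (P : ℂ → ℝ) (hP : ContDiff ℝ 1 P) (r t : ℝ) :
    HasDerivAt (fun s => P (pcx (r, s)))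
      (-(r * Real.sin t) * fderiv ℝ P (pcx (r, t)) 1
        + r * Real.cos t * fderiv ℝ P (pcx (r, t)) Complex.I) t := by
  have h1 : HasDerivAt (fun s : ℝ => pcx (r, s))
      (((-(r * Real.sin t) : ℝ) : ℂ) + ((r * Real.cos t : ℝ) : ℂ) * Complex.I) t := by
    unfold pcx
    have := (((Real.hasDerivAt_cos t).ofReal_comp).add
      (((Real.hasDerivAt_sin t).ofReal_comp).mul_const Complex.I)).const_mul (r : ℂ)
    refine this.congr_deriv ?_
    push_cast; ring
  have h2 := ((hP.differentiable (by norm_num)) (pcx (r, t))).hasFDerivAt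
  have h3 := h2.comp_hasDerivAt t h1
  rw [clm_decomp] at h3
  exact h3

lemma fderiv_fst_eq (f : ℝ × ℝ → ℝ) (hf : ContDiff ℝ 1 f) (r t d : ℝ)
    (h : HasDerivAt (fun s => f (s, t)) d r) : fderiv ℝ f (r, t) (1, 0) = d := by
  have h2 := ((hf.differentiable (by norm_num)) (r, t)).hasFDerivAt
  have h1 : HasDerivAt (fun s : ℝ => (s, t)) ((1 : ℝ), (0 : ℝ)) r :=
    (hasDerivAt_id r).prodMk (hasDerivAt_const r t)
  exact (h2.comp_hasDerivAt r h1).unique h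

lemma fderiv_snd_eq (f : ℝ × ℝ → ℝ) (hf : ContDiff ℝ 1 f) (r t d : ℝ)
    (h : HasDerivAt (fun s => f (r, s)) d t) : fderiv ℝ f (r, t) (0, 1) = d := by
  have h2 := ((hf.differentiable (by norm_num)) (r, t)).hasFDerivAt
  have h1 : HasDerivAt (fun s : ℝ => (r, s)) ((0 : ℝ), (1 : ℝ)) t :=
    (hasDerivAt_const t r).prodMk (hasDerivAt_id t)
  exact (h2.comp_hasDerivAt t h1).unique h

lemma disk_polar (G : ℂ → ℝ) (hG : Continuous G) :
    ∫ x in unitDisk, G x = ∫ r in (0:ℝ)..1, ∫ t in (-π)..π, r * G (pcx (r, t)) := by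
  have hm : MeasurableSet unitDisk := Metric.isOpen_ball.measurableSet
  rw [← integral_indicator hm, ← Complex.integral_comp_polarCoord_symm]
  have hint : IntegrableOn (fun p : ℝ × ℝ => p.1 * G (pcx p))
      (Set.Ioo (0:ℝ) 1 ×ˢ Set.Ioo (-π) π) (volume.prod volume) := by
    have hc : Continuous (fun p : ℝ × ℝ => p.1 * G (pcx p)) :=
      continuous_fst.mul (hG.comp pcx_contDiff.continuous)
    refine (hc.continuousOn.integrableOn_compact
      ((isCompact_Icc (a := (0:ℝ)) (b := 1)).prod (isCompact_Icc (a := -π) (b := π)))).mono_set ?_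
    exact Set.prod_mono Set.Ioo_subset_Icc_self Set.Ioo_subset_Icc_self
  have hpi : -π ≤ π := by linarith [Real.pi_pos]
  rw [intervalIntegral.integral_of_le zero_le_one, integral_Ioc_eq_integral_Ioo]
  simp_rw [intervalIntegral.integral_of_le hpi, integral_Ioc_eq_integral_Ioo]
  rw [← setIntegral_prod _ hint, ← Measure.volume_eq_prod]
  have hms : MeasurableSet (Set.Ioo (0:ℝ) 1 ×ˢ Set.Ioo (-π) π) :=
    measurableSet_Ioo.prod measurableSet_Ioo
  have hmt : MeasurableSet polarCoord.target := polarCoord.open_target.measurableSet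
  rw [← integral_indicator hms, ← integral_indicator hmt]
  congr 1
  ext ⟨r, t⟩
  have e : Complex.polarCoord.symm (r, t) = pcx (r, t) := Complex.polarCoord_symm_apply _
  have hn : ∀ r t : ℝ, ‖pcx (r, t)‖ = |r| := by
    intro r t
    have : pcx (r, t) = Complex.polarCoord.symm (r, t) := (Complex.polarCoord_symm_apply _).symm
    rw [this, Complex.norm_polarCoord_symm]
  have hmem : pcx (r, t) ∈ unitDisk ↔ |r| < 1 := by
    rw [unitDisk, Metric.mem_ball, dist_zero_right, hn]
  simp only [Set.indicator_apply _ _ (r, t), e, polarCoord_target, Set.mem_prod, Set.mem_Ioi,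
    Set.mem_Ioo, smul_eq_mul]
  by_cases h0 : 0 < r
  · rw [abs_of_pos h0] at hmem
    by_cases h1 : r < 1
    · simp [h0, h1, Set.indicator_of_mem (hmem.2 h1)]
    · have h2 : pcx (r, t) ∉ unitDisk := fun h => h1 (hmem.1 h)
      simp [h0, h1, Set.indicator_of_notMem h2]
  · simp [h0]

lemma pcx_one (t : ℝ) : pcx (1, t) = bpt t := by
  simp [pcx, bpt, Complex.exp_mul_I]

lemma bpt_re (t : ℝ) : (bpt t).re = Real.cos t := by
  simp [bpt, Complex.exp_ofReal_mul_I_re]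

lemma bpt_im (t : ℝ) : (bpt t).im = Real.sin t := by
  simp [bpt, Complex.exp_ofReal_mul_I_im]

lemma bpt_add (t : ℝ) : bpt (t + 2 * π) = bpt t := by
  have := Complex.exp_periodic ((t : ℂ) * Complex.I)
  unfold bpt
  rw [← this]; congr 1; push_cast; ring

lemma divergence_disk (P Q : ℂ → ℝ) (hP : ContDiff ℝ 1 P) (hQ : ContDiff ℝ 1 Q) :
    ∫ x in unitDisk, (fderiv ℝ P x 1 + fderiv ℝ Q x Complex.I)
      = bint (fun x => P x * x.re + Q x * x.im) := by
  have hcs : ContDiff ℝ 1 (fun p : ℝ × ℝ => Real.cos p.2) := Real.contDiff_cos.comp contDiff_snd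
  have hsn : ContDiff ℝ 1 (fun p : ℝ × ℝ => Real.sin p.2) := Real.contDiff_sin.comp contDiff_snd
  have hPc := hP.comp pcx_contDiff
  have hQc := hQ.comp pcx_contDiff
  set f : ℝ × ℝ → ℝ := fun p => p.1 * (P (pcx p) * Real.cos p.2 + Q (pcx p) * Real.sin p.2) with hf
  set g : ℝ × ℝ → ℝ := fun p => Q (pcx p) * Real.cos p.2 - P (pcx p) * Real.sin p.2 with hg
  have cf : ContDiff ℝ 1 f := contDiff_fst.mul ((hPc.mul hcs).add (hQc.mul hsn))
  have cg : ContDiff ℝ 1 g := (hQc.mul hcs).sub (hPc.mul hsn)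
  have hG : Continuous (fun x => fderiv ℝ P x 1 + fderiv ℝ Q x Complex.I) :=
    ((hP.continuous_fderiv (by norm_num)).clm_apply continuous_const).add
      ((hQ.continuous_fderiv (by norm_num)).clm_apply continuous_const)
  rw [disk_polar _ hG]
  have key : ∀ r t : ℝ, r * (fderiv ℝ P (pcx (r, t)) 1 + fderiv ℝ Q (pcx (r, t)) Complex.I)
      = fderiv ℝ f (r, t) (1, 0) + fderiv ℝ g (r, t) (0, 1) := by
    intro r t
    have d1 := (hasDerivAt_id r).mul (((hasDeriv_r P hP r t).mul_const (Real.cos t)).add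
      ((hasDeriv_r Q hQ r t).mul_const (Real.sin t)))
    have d2 := ((hasDeriv_t Q hQ r t).mul (Real.hasDerivAt_cos t)).sub
        ((hasDeriv_t P hP r t).mul (Real.hasDerivAt_sin t))
    rw [fderiv_fst_eq f cf r t _ d1, fderiv_snd_eq g cg r t _ d2]
    have := Real.sin_sq_add_cos_sq t
    simp only [id, Pi.add_apply]
    linear_combination (-r * (fderiv ℝ P (pcx (r, t)) 1 + fderiv ℝ Q (pcx (r, t)) Complex.I)) * this
  simp_rw [key]
  rw [integral2_divergence_prod_of_hasFDerivAt f g (fderiv ℝ f) (fderiv ℝ g) 0 (-π) 1 π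
    cf.continuous.continuousOn cg.continuous.continuousOn
    (fun x _ => ((cf.differentiable (by norm_num)) x).hasFDerivAt)
    (fun x _ => ((cg.differentiable (by norm_num)) x).hasFDerivAt) ?_]
  · have e1 : ∀ r : ℝ, g (r, π) = g (r, -π) := by
      intro r; simp [hg, pcx]
    have e2 : ∀ t : ℝ, f (0, t) = 0 := by intro t; simp [hf]
    have e3 : ∀ t : ℝ, f (1, t) = P (bpt t) * (bpt t).re + Q (bpt t) * (bpt t).im := by
      intro t; simp only [hf, pcx_one, bpt_re, bpt_im]; ring
    simp_rw [e1, e2, e3]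
    have per : Function.Periodic
        (fun t => P (bpt t) * (bpt t).re + Q (bpt t) * (bpt t).im) (2 * π) := by
      intro t; simp only [bpt_add]
    have := per.intervalIntegral_add_eq (-π) 0
    rw [show -π + 2 * π = π by ring, zero_add] at this
    simp only [bint, this]; simp
  · refine Continuous.continuousOn ?_ |>.integrableOn_compact (isCompact_uIcc.prod isCompact_uIcc)
    exact ((cf.continuous_fderiv (by norm_num)).clm_apply continuous_const).add
        ((cg.continuous_fderiv (by norm_num)).clm_apply continuous_const)

lemma pd_contDiff (u : ℂ → ℝ) (hu : ContDiff ℝ 2 u) (v : ℂ) : ContDiff ℝ 1 (fun x => pd u v x) :=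
  (hu.fderiv_right (m := 1) (by norm_num)).clm_apply contDiff_const

lemma pd_symm (u : ℂ → ℝ) (hu : ContDiff ℝ 2 u) (v w x : ℂ) :
    fderiv ℝ (fun y => pd u v y) x w = fderiv ℝ (fun y => pd u w y) x v := by
  have hd : DifferentiableAt ℝ (fderiv ℝ u) x :=
    ((hu.fderiv_right (m := 1) (by norm_num)).differentiable (by norm_num)) x
  have e : ∀ v w : ℂ, fderiv ℝ (fun y => pd u v y) x w = fderiv ℝ (fderiv ℝ u) x w v := by
    intro v w
    have := hd.hasFDerivAt.clm_apply (hasFDerivAt_const v x)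
    unfold pd
    rw [this.fderiv]; simp
  rw [e, e]
  exact (hu.contDiffAt.isSymmSndFDerivAt (by simp)) w v

lemma pointwise_div (k u : ℂ → ℝ) (F : ℂ → ℂ) (hk : ContDiff ℝ 1 k) (hu : ContDiff ℝ 2 u)
    (hF : ContDiff ℝ 1 F) (x : ℂ) :
    fderiv ℝ (fun x => (pd u 1 x * (F x).re + pd u Complex.I x * (F x).im) * pd u 1 x
        - (pd u 1 x * pd u 1 x + pd u Complex.I x * pd u Complex.I x) * (F x).re * (1/2)
        + k x * Real.exp (u x) * (F x).re * 2) x 1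
    + fderiv ℝ (fun x => (pd u 1 x * (F x).re + pd u Complex.I x * (F x).im) * pd u Complex.I x
        - (pd u 1 x * pd u 1 x + pd u Complex.I x * pd u Complex.I x) * (F x).im * (1/2)
        + k x * Real.exp (u x) * (F x).im * 2) x Complex.I
    = (lap u x + 2 * k x * Real.exp (u x)) * dotC (gradC u x) (F x)
        + 2 * Real.exp (u x) * (dotC (gradC k x) (F x) + k x * divC F x)
        + dotC (fderiv ℝ F x (gradC u x)) (gradC u x)
        - divC F x * gradSq u x / 2 := by
  have da := (((pd_contDiff u hu 1).differentiable (by norm_num)) x).hasFDerivAt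
  have db := (((pd_contDiff u hu Complex.I).differentiable (by norm_num)) x).hasFDerivAt
  have du := ((hu.differentiable (by norm_num)) x).hasFDerivAt
  have dk := ((hk.differentiable (by norm_num)) x).hasFDerivAt
  have dF := ((hF.differentiable (by norm_num)) x).hasFDerivAt
  have d1 : HasFDerivAt (fun x => (F x).re) (Complex.reCLM.comp (fderiv ℝ F x)) x :=
    Complex.reCLM.hasFDerivAt.comp x dF
  have d2 : HasFDerivAt (fun x => (F x).im) (Complex.imCLM.comp (fderiv ℝ F x)) x :=
    Complex.imCLM.hasFDerivAt.comp x dF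
  have hdot := (da.mul d1).add (db.mul d2)
  have hsq := (da.mul da).add (db.mul db)
  have hke := dk.mul du.exp
  have hP := ((hdot.mul da).sub ((hsq.mul d1).mul_const (1/2))).add ((hke.mul d1).mul_const 2)
  have hQ := ((hdot.mul db).sub ((hsq.mul d2).mul_const (1/2))).add ((hke.mul d2).mul_const 2)
  have eP := congrArg (fun A : ℂ →L[ℝ] ℝ => A 1) hP.fderiv
  have eQ := congrArg (fun A : ℂ →L[ℝ] ℝ => A Complex.I) hQ.fderiv
  refine (congrArg₂ (· + ·) eP eQ).trans ?_
  have hFg : fderiv ℝ F x (gradC u x)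
      = pd u 1 x • fderiv ℝ F x 1 + pd u Complex.I x • fderiv ℝ F x Complex.I := by
    rw [← map_smul, ← map_smul, ← map_add]
    congr 1
    apply Complex.ext <;> simp [gradC]
  have hs := pd_symm u hu 1 Complex.I x
  rw [hFg]
  simp only [lap, dotC, gradC, divC, gradSq, add_apply, sub_apply, smul_apply,
    smul_eq_mul, ContinuousLinearMap.comp_apply,
    Complex.reCLM_apply, Complex.imCLM_apply, Pi.add_apply, Pi.mul_apply, Complex.add_re,
    Complex.add_im, Complex.real_smul, Complex.re_ofReal_mul, Complex.im_ofReal_mul]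
  rw [hs]
  unfold pd
  ring

/-- Lemma 2.3 (Pohozaev-type identity) for solutions of (P_ε). -/
theorem pohozaev_identity
    (K h : ℂ → ℝ)
    (hK : ContDiff ℝ 2 K)
    (hKneg : ∀ x ∈ closedUnitDisk, K x < 0)
    (hh : ContDiff ℝ 2 (fun θ => h (bpt θ)))
    (ε : ℝ) (hε : -1 < ε)
    (u : ℂ → ℝ) (hu : IsPerturbedSolution K h ε u)
    (F : ℂ → ℂ) (hF : ContDiff ℝ 1 F) :
    bint (fun x =>
        2 * Keps K ε x * Real.exp (u x) * dotC (F x) x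
        + (2 * heps h ε x * Real.exp (u x / 2) - 2 * htil ε) * dotC (gradC u x) (F x)
        - gradSq u x / 2 * dotC (F x) x)
    = ∫ x in unitDisk,
        (2 * Ktil ε * dotC (gradC u x) (F x)
        + 2 * Real.exp (u x) * (dotC (gradC (Keps K ε) x) (F x) + Keps K ε x * divC F x)
        + dotC (fderiv ℝ F x (gradC u x)) (gradC u x)
        - divC F x * gradSq u x / 2) := by
  obtain ⟨hu2, hpde, hbc⟩ := hu
  have hk : ContDiff ℝ 1 (Keps K ε) := by
    have := hK.of_le (m := 1) (by norm_num)
    unfold Keps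
    exact (this.sub contDiff_const).div_const _
  have ha := pd_contDiff u hu2 1
  have hb := pd_contDiff u hu2 Complex.I
  have h1 : ContDiff ℝ 1 (fun x => (F x).re) := Complex.reCLM.contDiff.comp hF
  have h2 : ContDiff ℝ 1 (fun x => (F x).im) := Complex.imCLM.contDiff.comp hF
  have hdot := (ha.mul h1).add (hb.mul h2)
  have hsq := (ha.mul ha).add (hb.mul hb)
  have hke := hk.mul (hu2.of_le (m := 1) (by norm_num)).exp
  have cP := ((hdot.mul ha).sub ((hsq.mul h1).mul (contDiff_const (c := (1/2 : ℝ))))).add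
    ((hke.mul h1).mul (contDiff_const (c := (2 : ℝ))))
  have cQ := ((hdot.mul hb).sub ((hsq.mul h2).mul (contDiff_const (c := (1/2 : ℝ))))).add
    ((hke.mul h2).mul (contDiff_const (c := (2 : ℝ))))
  have D := divergence_disk _ _ cP cQ
  refine Eq.trans ?_ (D.symm.trans ?_)
  · unfold bint
    congr 1
    ext t
    have hm : bpt t ∈ unitCircle := by
      simp [unitCircle, bpt, Complex.norm_exp_ofReal_mul_I]
    have hb := hbc _ hm
    unfold nderiv at hb
    have hb2 : 2 * heps h ε (bpt t) * Real.exp (u (bpt t) / 2) - 2 * htil ε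
        = (bpt t).re * pd u 1 (bpt t) + (bpt t).im * pd u Complex.I (bpt t) := by linarith
    beta_reduce
    rw [hb2]
    simp only [dotC, gradC, gradSq]
    ring
  · refine setIntegral_congr_fun Metric.isOpen_ball.measurableSet ?_
    intro x hx
    refine (pointwise_div (Keps K ε) u F hk hu2 hF x).trans ?_
    have hp := hpde x hx
    have hp2 : lap u x + 2 * Keps K ε x * Real.exp (u x) = 2 * Ktil ε := by linarith
    rw [hp2]

end
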